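/- Let d be an ordering of V, let S ⊆ V, and let d' be the ordering of V∖S induced by d (keeping the vertices of V∖S in the same relative order). Then the value of d' on the induced subgraph G[V∖S] satisfies val_{G[V∖S]}(d') ≥ val_G(d) − Σ f(|d(u)−d(v)|)·w(u,v), where the subtracted sum ranges over edges {u,v} ∈ E with at least one endpoint in S. (Removing vertices can only decrease the distance between the endpoints of the remaining edges, and f is non-increasing.) -/

import Mathlib

open Classical in
/-- The Ext-TSP value of an ordering `d` of the vertices of `G`. -/
noncomputable def extVal {V : Type} [Fintype V] (G : SimpleGraph V)
    (w : V → V → ℝ) (f : ℕ → ℝ) (d : V ≃ Fin (Fintype.card V)) : ℝ :=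
  (1 / 2) * ∑ u : V, ∑ v : V,
    if G.Adj u v then f (Nat.dist (d u) (d v)) * w u v else 0

open Classical in
/-- The Ext-TSP value of an ordering of `S` on the induced subgraph `G[S]`. -/
noncomputable def extValOn {V : Type} [Fintype V] [DecidableEq V] (G : SimpleGraph V)
    (w : V → V → ℝ) (f : ℕ → ℝ) (S : Finset V)
    (d : {x // x ∈ S} ≃ Fin S.card) : ℝ :=
  (1 / 2) * ∑ u : {x // x ∈ S}, ∑ v : {x // x ∈ S},
    if G.Adj u.1 v.1 then f (Nat.dist (d u) (d v)) * w u.1 v.1 else 0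

/-!
Delete the vertices of `S` in two stages. Removing them while every other vertex keeps its position
loses exactly the edges meeting `S`. Closing the gaps then moves no two remaining vertices further
apart, because the map from new to old positions is strictly increasing, and so injects the integers
between two new positions into those between the corresponding old ones.
-/

theorem card_Ico_le_card_Ico_of_strictMono {α β : Type*} [LinearOrder α] [LocallyFiniteOrder α]
    [Preorder β] [LocallyFiniteOrder β] {g : α → β} (hg : StrictMono g) (a b : α) :
    (Finset.Ico a b).card ≤ (Finset.Ico (g a) (g b)).card :=
  Finset.card_le_card_of_injOn g
    (by simpa only [Finset.coe_Ico] using Set.mapsTo_iff_image_subset.mpr hg.image_Ico_subset)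
    hg.injective.injOn

theorem natDist_le_natDist_of_strictMono {n : ℕ} {g : Fin n → ℕ} (hg : StrictMono g)
    (i j : Fin n) : Nat.dist i j ≤ Nat.dist (g i) (g j) := by
  wlog hij : i ≤ j generalizing i j
  · rw [Nat.dist_comm, Nat.dist_comm (g i)]
    exact this j i (le_of_not_ge hij)
  rw [Nat.dist_eq_sub_of_le hij, Nat.dist_eq_sub_of_le (hg.monotone hij), ← Fin.card_Ico,
    ← Nat.card_Ico]
  exact card_Ico_le_card_Ico_of_strictMono hg i j

theorem natDist_equivFin_le {α : Type*} {n : ℕ} (e : α ≃ Fin n) {p : α → ℕ}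
    (hp : ∀ x y, e x < e y → p x < p y) (x y : α) :
    Nat.dist (e x) (e y) ≤ Nat.dist (p x) (p y) := by
  have hmono : StrictMono (p ∘ e.symm) := fun i j hij =>
    hp _ _ (by simpa only [Equiv.apply_symm_apply] using hij)
  simpa only [Function.comp_apply, Equiv.symm_apply_apply] using
    natDist_le_natDist_of_strictMono hmono (e x) (e y)

theorem sum_sum_eq_sum_compl_add_sum_ite {V W M : Type*} [Fintype V] [DecidableEq V]
    [Fintype W] [DecidableEq W] [AddCommMonoid M] (S : Finset V) (T : Finset W) (F : V → W → M) :
    ∑ u, ∑ v, F u v =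
      (∑ u ∈ Sᶜ, ∑ v ∈ Tᶜ, F u v) + ∑ u, ∑ v, if u ∈ S ∨ v ∈ T then F u v else 0 := by
  have hcompl : ({q : V × W | ¬(q.1 ∈ S ∨ q.2 ∈ T)} : Finset (V × W)) = Sᶜ ×ˢ Tᶜ := by
    ext q
    simp
  rw [← Fintype.sum_prod_type', ← Fintype.sum_prod_type', ← Finset.sum_product',
    ← Finset.sum_filter, ← hcompl, add_comm, Finset.sum_filter_add_sum_filter_not]

open Classical in
/-- The Ext-TSP value of the edges of `G` inside `T` when each vertex `u` sits at position `p u`.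
Unlike in an ordering of `T`, the positions may leave gaps, as they do right after the other
vertices have been deleted. -/
noncomputable def placementVal {V : Type*} (G : SimpleGraph V) (w : V → V → ℝ) (f : ℕ → ℝ)
    (T : Finset V) (p : V → ℕ) : ℝ :=
  (1 / 2) * ∑ u ∈ T, ∑ v ∈ T, if G.Adj u v then f (Nat.dist (p u) (p v)) * w u v else 0

section

variable {V : Type} [Fintype V] [DecidableEq V] (G : SimpleGraph V) (w : V → V → ℝ) (f : ℕ → ℝ)

theorem extVal_eq_placementVal_compl_add [DecidableRel G.Adj] (S : Finset V)
    (d : V ≃ Fin (Fintype.card V)) :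
    extVal G w f d = placementVal G w f Sᶜ (fun u => d u) +
      (1 / 2) * ∑ u : V, ∑ v : V,
        if G.Adj u v ∧ (u ∈ S ∨ v ∈ S) then f (Nat.dist (d u) (d v)) * w u v else 0 := by
  rw [extVal, placementVal, ← mul_add, sum_sum_eq_sum_compl_add_sum_ite S S]
  simp only [← ite_and, and_comm]
  congr!

variable {w f}

theorem placementVal_le_extValOn (hf : Antitone f) {T : Finset V}
    (hw : ∀ u ∈ T, ∀ v ∈ T, G.Adj u v → 0 ≤ w u v) {p : V → ℕ} (e : {x // x ∈ T} ≃ Fin T.card)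
    (hp : ∀ x y, e x < e y → p x < p y) :
    placementVal G w f T p ≤ extValOn G w f T e := by
  rw [placementVal, extValOn, ← Finset.sum_coe_sort]
  simp_rw [← Finset.sum_coe_sort T]
  gcongr with u _ v _
  split_ifs with huv
  · exact mul_le_mul_of_nonneg_right (hf (natDist_equivFin_le e hp u v)) (hw u u.2 v v.2 huv)
  · rfl

theorem extTSP_delete_vertices_general [DecidableRel G.Adj]
    (hw : ∀ u v, G.Adj u v → 0 ≤ w u v) (hf : Antitone f)
    (S : Finset V) (d : V ≃ Fin (Fintype.card V)) (d' : {x // x ∈ Sᶜ} ≃ Fin Sᶜ.card)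
    (hd' : ∀ x y : {x // x ∈ Sᶜ}, d' x ≤ d' y ↔ d x.1 ≤ d y.1) :
    extValOn G w f Sᶜ d' ≥
      extVal G w f d -
        (1 / 2) * ∑ u : V, ∑ v : V,
          (if G.Adj u v ∧ (u ∈ S ∨ v ∈ S)
           then f (Nat.dist (d u) (d v)) * w u v else 0) := by
  rw [extVal_eq_placementVal_compl_add G w f S d, add_sub_cancel_right]
  exact placementVal_le_extValOn G hf (fun u _ v _ => hw u v) d' fun x y =>
    (lt_iff_lt_of_le_iff_le (hd' y x)).mp

end

/-- Deleting a set `S` of vertices: if `d'` is the ordering of `V ∖ S`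
induced by `d` (same relative order), then the value of `d'` on the induced subgraph
`G[V ∖ S]` is at least `val_G(d)` minus the discounted weight of all edges with at least one
endpoint in `S`.  (Removing vertices only decreases distances, and `f` is non-increasing.) -/
theorem extTSP_delete_vertices {V : Type} [Fintype V] [DecidableEq V]
    (G : SimpleGraph V) [DecidableRel G.Adj]
    (w : V → V → ℝ) (hw_symm : ∀ u v, w u v = w v u)
    (hw_pos : ∀ u v, G.Adj u v → 0 < w u v)
    (k : ℕ) (hk : 1 ≤ k)
    (f : ℕ → ℝ) (hf_nonneg : ∀ i, 0 ≤ f i) (hf_mono : Antitone f)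
    (hf_one : f 1 = 1) (hf_zero : ∀ i, k < i → f i = 0)
    (S : Finset V) (d : V ≃ Fin (Fintype.card V))
    (d' : {x // x ∈ Sᶜ} ≃ Fin Sᶜ.card)
    (hd' : ∀ x y : {x // x ∈ Sᶜ}, d' x ≤ d' y ↔ d x.1 ≤ d y.1) :
    extValOn G w f Sᶜ d' ≥
      extVal G w f d -
        (1 / 2) * ∑ u : V, ∑ v : V,
          (if G.Adj u v ∧ (u ∈ S ∨ v ∈ S)
           then f (Nat.dist (d u) (d v)) * w u v else 0) :=
  extTSP_delete_vertices_general G (fun u v huv => (hw_pos u v huv).le) hf_mono S d d' hd'
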